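/- Asymmetry upper bound for graph perturbations of the lens (Step 3 of the proof of Theorem 4.2). Let σ ∈ [−1/2, 1/2] and let g₁, g₂ : ℝ → ℝ be Lipschitz functions vanishing outside a compact set, with g₁ = g₂ on ℝ ∖ I_σ. Then (1/2)·[ vol(F₁ Δ L₁) + vol(F₂ Δ L₂) + vol(F₃ Δ L₃) ] ≤ ∫_ℝ |g₁ − ũ₁| dx + ∫_ℝ |g₂ − ũ₂| dx + |σ|·(2+σ)·m. -/

import Mathlib

/-!
Whether or not `g₂ ≤ g₁`, every point of one of the three symmetric differences lies, in its
vertical line, between `g₁` and `u` or between `g₂` and `-u`. The region between two graphs `f, h`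
has area `∫ |f - h|` (`volume_graphGap`), so half the sum of the three volumes is at most `∫ |g₁ -
u| + ∫ |g₂ + u|`. By the triangle inequality it remains to bound `2 ∫ |ũ - u|`. Since `u` is concave
on its support and nonnegative, the lens and its dilate are nested (`ulens_le_dilate`), so `ũ - u`
has constant sign and `∫ |ũ - u| = |∫ ũ - ∫ u| = |(1+σ)² - 1| ∫ u` with `∫ u = m / 2`
(`integral_ulens`).
-/

open MeasureTheory
open scoped symmDiff

/-- `ℓ = √3/2`, the half-width of the unit-radius standard lens. -/
noncomputable def ell : ℝ := Real.sqrt 3 / 2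

/-- `m = 2π/3 − √3/2`, the area of the unit-radius standard lens. -/
noncomputable def mlens : ℝ := 2 * Real.pi / 3 - Real.sqrt 3 / 2

/-- The profile `u(x) = √(1−x²) − 1/2` for `|x| ≤ ℓ`, extended by `0`. -/
noncomputable def ulens (x : ℝ) : ℝ :=
  if |x| ≤ ell then Real.sqrt (1 - x ^ 2) - 1 / 2 else 0

/-- The rescaled profile `ũ(x) = (1+σ)·u(x/(1+σ))`. -/
noncomputable def utilde (σ x : ℝ) : ℝ := (1 + σ) * ulens (x / (1 + σ))

/-- The interval `I_σ = [−(1+σ)ℓ, (1+σ)ℓ]`. -/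
noncomputable def Isig (σ : ℝ) : Set ℝ := Set.Icc (-((1 + σ) * ell)) ((1 + σ) * ell)

/-- The region `{(x,y) : h₂(x) < y < h₁(x)}` between the graphs of `h₂` and `h₁`. -/
def graphBetween (h₁ h₂ : ℝ → ℝ) : Set (ℝ × ℝ) := {p | h₂ p.1 < p.2 ∧ p.2 < h₁ p.1}

/-- The region `{(x,y) : y > h(x)}` above the graph of `h`. -/
def graphAbove (h : ℝ → ℝ) : Set (ℝ × ℝ) := {p | h p.1 < p.2}

/-- The region `{(x,y) : y < h(x)}` below the graph of `h`. -/
def graphBelow (h : ℝ → ℝ) : Set (ℝ × ℝ) := {p | p.2 < h p.1}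

theorem ell_nonneg : 0 ≤ ell := by unfold ell; positivity

theorem ell_sq : ell ^ 2 = 3 / 4 := by
  unfold ell
  rw [div_pow, Real.sq_sqrt (by norm_num)]
  norm_num

theorem sq_le_of_abs_le_ell {x : ℝ} (hx : |x| ≤ ell) : x ^ 2 ≤ 3 / 4 := by
  rw [← ell_sq, ← sq_abs x]
  exact pow_le_pow_left₀ (abs_nonneg x) hx 2

theorem half_le_sqrt {x : ℝ} (hx : |x| ≤ ell) : 1 / 2 ≤ Real.sqrt (1 - x ^ 2) := by
  apply Real.le_sqrt_of_sq_le
  linarith [sq_le_of_abs_le_ell hx]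

theorem ulens_nonneg (x : ℝ) : 0 ≤ ulens x := by
  unfold ulens
  split_ifs with h
  · linarith [half_le_sqrt h]
  · exact le_rfl

/-- Dilating the lens by a factor `s ≥ 1` enlarges it. -/
theorem ulens_le_dilate {s : ℝ} (hs : 1 ≤ s) (x : ℝ) : ulens x ≤ s * ulens (x / s) := by
  have hs0 : 0 < s := by linarith
  by_cases hx : |x| ≤ ell
  · have hxs : |x / s| ≤ ell := by
      rw [abs_div, abs_of_pos hs0]
      exact (div_le_self (abs_nonneg x) hs).trans hx
    have hx2 := sq_le_of_abs_le_ell hx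
    have e : s * Real.sqrt (1 - (x / s) ^ 2) = Real.sqrt (s ^ 2 - x ^ 2) := by
      have : s ^ 2 - x ^ 2 = s ^ 2 * (1 - (x / s) ^ 2) := by field_simp
      rw [this, Real.sqrt_mul (sq_nonneg s), Real.sqrt_sq hs0.le]
    have hb2 : Real.sqrt (1 - x ^ 2) ^ 2 = 1 - x ^ 2 := Real.sq_sqrt (by linarith)
    have hb1 : Real.sqrt (1 - x ^ 2) ≤ 1 := Real.sqrt_le_one.2 (by nlinarith [sq_nonneg x])
    have key : Real.sqrt (1 - x ^ 2) + (s - 1) / 2 ≤ Real.sqrt (s ^ 2 - x ^ 2) := by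
      apply Real.le_sqrt_of_sq_le
      nlinarith [mul_nonneg (sub_nonneg.2 hs) (sub_nonneg.2 hb1),
        mul_nonneg (sub_nonneg.2 hs) hs0.le]
    simp only [ulens, hx, hxs, if_true]
    rw [mul_sub, e]
    linarith
  · have : ulens x = 0 := by simp [ulens, hx]
    rw [this]
    exact mul_nonneg hs0.le (ulens_nonneg _)

theorem ulens_eq_indicator :
    ulens = (Set.Icc (-ell) ell).indicator (fun x => Real.sqrt (1 - x ^ 2) - 1 / 2) := by
  funext x
  simp [ulens, Set.indicator, abs_le]

theorem continuous_profile : Continuous (fun x : ℝ => Real.sqrt (1 - x ^ 2) - 1 / 2) := by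
  fun_prop

theorem measurable_ulens : Measurable ulens := by
  rw [ulens_eq_indicator]
  exact continuous_profile.measurable.indicator measurableSet_Icc

theorem integrable_ulens : Integrable ulens := by
  rw [ulens_eq_indicator, integrable_indicator_iff measurableSet_Icc]
  exact continuous_profile.continuousOn.integrableOn_Icc

/-- The area under the profile is half the area of the lens; a primitive of `√(1-x²) - 1/2` is
`(arcsin x + x √(1-x²)) / 2 - x / 2`. -/
theorem integral_ulens : ∫ x, ulens x = mlens / 2 := by
  have h0 := ell_nonneg
  have h1 := ell_sq
  have hd : ∀ x ∈ Set.uIcc (-ell) ell,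
      HasDerivAt (fun x => (Real.arcsin x + x * Real.sqrt (1 - x ^ 2)) / 2 - x / 2)
        (Real.sqrt (1 - x ^ 2) - 1 / 2) x := by
    intro x hx
    rw [Set.uIcc_of_le (by linarith)] at hx
    have hx2 := sq_le_of_abs_le_ell (abs_le.2 hx)
    have hpos : 0 < 1 - x ^ 2 := by linarith
    have hne : Real.sqrt (1 - x ^ 2) ≠ 0 := (Real.sqrt_pos.2 hpos).ne'
    have hsq : Real.sqrt (1 - x ^ 2) ^ 2 = 1 - x ^ 2 := Real.sq_sqrt hpos.le
    have ha := Real.hasDerivAt_arcsin (x := x) (by intro h; subst h; norm_num at hx2)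
      (by intro h; subst h; norm_num at hx2)
    have hq : HasDerivAt (fun x : ℝ => 1 - x ^ 2) (-(2 * x)) x := by
      simpa using ((hasDerivAt_id x).pow 2).const_sub 1
    have hs := hq.sqrt hpos.ne'
    have := (((ha.add ((hasDerivAt_id x).mul hs)).div_const 2).sub
      ((hasDerivAt_id x).div_const 2))
    refine this.congr_deriv ?_
    simp only [id]
    field_simp
    linear_combination -hsq
  have hsqrt : Real.sqrt (1 - ell ^ 2) = 1 / 2 := by
    rw [h1, show (1 - 3 / 4 : ℝ) = (1 / 2) ^ 2 by norm_num, Real.sqrt_sq (by norm_num)]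
  have harc : Real.arcsin ell = Real.pi / 3 := by
    have : ell = Real.sin (Real.pi / 3) := by rw [Real.sin_pi_div_three]; rfl
    rw [this, Real.arcsin_sin] <;> linarith [Real.pi_pos]
  rw [ulens_eq_indicator, integral_indicator measurableSet_Icc, integral_Icc_eq_integral_Ioc,
    ← intervalIntegral.integral_of_le (by linarith),
    intervalIntegral.integral_eq_sub_of_hasDerivAt hd
      (continuous_profile.intervalIntegrable _ _)]
  simp only [neg_sq, Real.arcsin_neg, hsqrt, harc]
  unfold mlens ell
  ring

theorem integrable_utilde {σ : ℝ} (hσ : 0 < 1 + σ) : Integrable (utilde σ) :=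
  (integrable_ulens.comp_div hσ.ne').const_mul _

theorem integral_utilde {σ : ℝ} (hσ : 0 < 1 + σ) :
    ∫ x, utilde σ x = (1 + σ) ^ 2 * (mlens / 2) := by
  unfold utilde
  rw [integral_const_mul, Measure.integral_comp_div, integral_ulens, abs_of_pos hσ, smul_eq_mul]
  ring

theorem integral_abs_utilde_sub {σ : ℝ} (hσ : 0 < 1 + σ) :
    ∫ x, |utilde σ x - ulens x| = |σ| * (2 + σ) * mlens / 2 := by
  have hi : ∫ x, (utilde σ x - ulens x) = σ * (2 + σ) * mlens / 2 := by
    rw [integral_sub (integrable_utilde hσ) integrable_ulens, integral_utilde hσ, integral_ulens]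
    ring
  rcases le_total 0 σ with h | h
  · rw [abs_of_nonneg h, ← hi]
    congr 1
    funext x
    exact abs_of_nonneg (sub_nonneg.2 (ulens_le_dilate (by linarith) x))
  · rw [abs_of_nonpos h, show -σ * (2 + σ) * mlens / 2 = -(σ * (2 + σ) * mlens / 2) by ring, ← hi,
      ← integral_neg]
    congr 1
    funext x
    apply abs_of_nonpos
    -- The lens is the dilate, by the factor `1 / (1 + σ) ≥ 1`, of the contracted lens.
    have hk := ulens_le_dilate (s := (1 + σ)⁻¹) ((one_le_inv₀ hσ).2 (by linarith)) (x / (1 + σ))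
    rw [show x / (1 + σ) / (1 + σ)⁻¹ = x by field_simp] at hk
    have := mul_le_mul_of_nonneg_left hk hσ.le
    rw [mul_inv_cancel_left₀ hσ.ne'] at this
    unfold utilde
    linarith

/-- The closed region between the graphs of `f` and `h`, whichever of the two is above. -/
def graphGap (f h : ℝ → ℝ) : Set (ℝ × ℝ) := {p | p.2 ∈ Set.uIcc (h p.1) (f p.1)}

theorem volume_graphGap {f h : ℝ → ℝ} (hf : Measurable f) (hh : Measurable h)
    (hi : Integrable (fun x => |f x - h x|)) :
    volume (graphGap f h) = ENNReal.ofReal (∫ x, |f x - h x|) := by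
  have hm : MeasurableSet (graphGap f h) := by
    have e : graphGap f h = {p : ℝ × ℝ | min (h p.1) (f p.1) ≤ p.2} ∩
        {p : ℝ × ℝ | p.2 ≤ max (h p.1) (f p.1)} := rfl
    rw [e]
    exact (measurableSet_le (by fun_prop) (by fun_prop)).inter
      (measurableSet_le (by fun_prop) (by fun_prop))
  rw [Measure.volume_eq_prod, Measure.prod_apply hm,
    ofReal_integral_eq_lintegral_ofReal hi (Filter.Eventually.of_forall fun x => abs_nonneg _)]
  refine lintegral_congr fun x => ?_
  have e : Prod.mk x ⁻¹' graphGap f h = Set.uIcc (h x) (f x) := Set.ext fun _ => Iff.rfl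
  rw [e, Real.volume_interval]

theorem graphAbove_symmDiff_subset (f h : ℝ → ℝ) :
    graphAbove f ∆ graphAbove h ⊆ graphGap f h := by
  rintro ⟨x, y⟩ hp
  simp only [Set.mem_symmDiff, graphAbove, graphGap, Set.mem_ofPred_eq, Set.mem_uIcc] at *
  grind

theorem graphBelow_symmDiff_subset (f h : ℝ → ℝ) :
    graphBelow f ∆ graphBelow h ⊆ graphGap f h := by
  rintro ⟨x, y⟩ hp
  simp only [Set.mem_symmDiff, graphBelow, graphGap, Set.mem_ofPred_eq, Set.mem_uIcc] at *
  grind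

theorem graphBetween_symmDiff_subset (f₁ f₂ h₁ h₂ : ℝ → ℝ) :
    graphBetween f₁ f₂ ∆ graphBetween h₁ h₂ ⊆ graphGap f₁ h₁ ∪ graphGap f₂ h₂ := by
  rintro ⟨x, y⟩ hp
  simp only [Set.mem_symmDiff, graphBetween, graphGap, Set.mem_ofPred_eq, Set.mem_uIcc,
    Set.mem_union] at *
  grind

/-- Asymmetry upper bound for graph perturbations of the lens (Step 3 of the proof
of Theorem 4.2): for `σ ∈ [−1/2,1/2]` and Lipschitz, compactly supported `g₁, g₂`
with `g₁ = g₂` off `I_σ`, the `L¹`-distance between the graph-type partition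
`(F₁,F₂,F₃)` determined by `g₁, g₂` and the standard lens partition `(L₁,L₂,L₃)`
is at most `∫|g₁ − ũ₁| + ∫|g₂ − ũ₂| + |σ|·(2+σ)·m`. -/
theorem lens_asymmetry_upper_bound (σ : ℝ)
    (hσ : σ ∈ Set.Icc (-(1 / 2) : ℝ) (1 / 2)) (g₁ g₂ : ℝ → ℝ) (K₁ K₂ : NNReal)
    (hg₁ : LipschitzWith K₁ g₁) (hg₂ : LipschitzWith K₂ g₂)
    (hsupp₁ : HasCompactSupport g₁) (hsupp₂ : HasCompactSupport g₂)
    (heq : ∀ x ∉ Isig σ, g₁ x = g₂ x) :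
    (1 / 2 : ENNReal) *
        (volume (graphBetween g₁ g₂ ∆ graphBetween ulens (fun x => -ulens x))
          + volume (graphAbove g₁ ∆ graphAbove ulens)
          + volume (graphBelow g₂ ∆ graphBelow (fun x => -ulens x)))
      ≤ ENNReal.ofReal ((∫ x, |g₁ x - utilde σ x|)
          + (∫ x, |g₂ x - (-(utilde σ x))|) + |σ| * (2 + σ) * mlens) := by
  have hs : 0 < 1 + σ := by linarith [hσ.1]
  have i₁ : Integrable g₁ := hg₁.continuous.integrable_of_hasCompactSupport hsupp₁
  have i₂ : Integrable g₂ := hg₂.continuous.integrable_of_hasCompactSupport hsupp₂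
  have iu := integrable_ulens
  have iv := integrable_utilde hs
  have iun : Integrable (fun x => -ulens x) := iu.neg
  have ivn : Integrable (fun x => -utilde σ x) := iv.neg
  have j₁ : Integrable (fun x => |g₁ x - utilde σ x|) := (i₁.sub iv).abs
  have j₂ : Integrable (fun x => |g₂ x - -utilde σ x|) := (i₂.sub ivn).abs
  have jd : Integrable (fun x => |utilde σ x - ulens x|) := (iv.sub iu).abs
  have A := volume_graphGap hg₁.continuous.measurable measurable_ulens (i₁.sub iu).abs
  have B := volume_graphGap hg₂.continuous.measurable measurable_ulens.neg (i₂.sub iun).abs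
  have tri₁ : ∫ x, |g₁ x - ulens x| ≤ (∫ x, |g₁ x - utilde σ x|) + |σ| * (2 + σ) * mlens / 2 := by
    rw [← integral_abs_utilde_sub hs, ← integral_add j₁ jd]
    exact integral_mono (i₁.sub iu).abs (j₁.add jd)
      fun x => abs_sub_le _ _ _
  have tri₂ : ∫ x, |g₂ x - -ulens x| ≤
      (∫ x, |g₂ x - -utilde σ x|) + |σ| * (2 + σ) * mlens / 2 := by
    rw [← integral_abs_utilde_sub hs, ← integral_add j₂ jd]
    refine integral_mono (i₂.sub iun).abs (j₂.add jd) fun x => ?_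
    have := abs_sub_le (g₂ x) (-utilde σ x) (-ulens x)
    rwa [neg_sub_neg (utilde σ x), abs_sub_comm (ulens x)] at this
  have hb := (measure_mono (μ := volume)
    (graphBetween_symmDiff_subset g₁ g₂ ulens (fun x => -ulens x))).trans (measure_union_le _ _)
  have ha := measure_mono (μ := volume) (graphAbove_symmDiff_subset g₁ ulens)
  have hc := measure_mono (μ := volume) (graphBelow_symmDiff_subset g₂ (fun x => -ulens x))
  calc _ ≤ (1 / 2 : ENNReal) * (2 * (volume (graphGap g₁ ulens)
          + volume (graphGap g₂ (fun x => -ulens x)))) := by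
        gcongr
        refine (add_le_add (add_le_add hb ha) hc).trans (le_of_eq ?_)
        ring
    _ = volume (graphGap g₁ ulens) + volume (graphGap g₂ (fun x => -ulens x)) := by
        rw [← mul_assoc, one_div, ENNReal.inv_mul_cancel two_ne_zero ENNReal.ofNat_ne_top, one_mul]
    _ = ENNReal.ofReal ((∫ x, |g₁ x - ulens x|) + ∫ x, |g₂ x - -ulens x|) := by
        rw [A, ENNReal.ofReal_add (integral_nonneg fun _ => abs_nonneg _)
          (integral_nonneg fun _ => abs_nonneg _)]
        exact congrArg _ B
    _ ≤ _ := ENNReal.ofReal_le_ofReal (by linarith)
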